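/- arXiv:1909.09840 — 4 statements merged into one kernel-verified Lean document; each statement's English description precedes it below -/
import Mathlib

section
/- For every h ∈ (−1/4, 0), I₁ is differentiable at h with I₁(h) = (h + 1/4)·I₁'(h), and explicitly I₁(h) = π·√2·(h + 1/4). -/
/-!
Completing the square, `2h + x² − x⁴/2 = (s² − (x² − 1)²)/2` with `s = √(1+4h)`. The factor `x` in
the integrand makes the substitution `v = (x² − 1)/s` available; it carries `[x₋, x₊]` to `[-1, 1]`
and turns `I₁(h)` into `s²/√2` times the half-disc area `∫_{-1}^{1} √(1 − v²) dv = π/2`.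
So `I₁` coincides with an affine function on the open interval, and the statements about the
derivative follow.
-/

open Set

/-- Lower endpoint of the oval projection: `x₋(h) = √(1 − √(1+4h))`. -/
noncomputable def xminus (h : ℝ) : ℝ := Real.sqrt (1 - Real.sqrt (1 + 4*h))

/-- Upper endpoint of the oval projection: `x₊(h) = √(1 + √(1+4h))`. -/
noncomputable def xplus (h : ℝ) : ℝ := Real.sqrt (1 + Real.sqrt (1 + 4*h))

/-- The Abelian integral `I_k(h) = 2∫_{x₋(h)}^{x₊(h)} x^k √(2h + x² − x⁴/2) dx`. -/
noncomputable def AbI (k : ℕ) (h : ℝ) : ℝ :=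
  2 * ∫ x in (xminus h)..(xplus h), x ^ k * Real.sqrt (2*h + x^2 - x^4/2)

theorem AbI_one_eq {h : ℝ} (hh : h ∈ Set.Ioo (-(1:ℝ)/4) 0) :
    AbI 1 h = Real.pi * Real.sqrt 2 * (h + 1/4) := by
  obtain ⟨h1, h2⟩ := hh
  have hpos : 0 < 1 + 4*h := by linarith
  obtain ⟨s, hs⟩ : ∃ s, s = Real.sqrt (1 + 4*h) := ⟨_, rfl⟩
  have hs0 : 0 < s := hs ▸ Real.sqrt_pos.2 hpos
  have hs2 : s^2 = 1 + 4*h := by rw [hs]; exact Real.sq_sqrt hpos.le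
  have hs1 : s ≤ 1 := by nlinarith
  have hm : xminus h ^ 2 = 1 - s := by
    rw [xminus, ← hs]; exact Real.sq_sqrt (by linarith)
  have hp : xplus h ^ 2 = 1 + s := by
    rw [xplus, ← hs]; exact Real.sq_sqrt (by linarith)
  have h20 : Real.sqrt 2 ≠ 0 := by positivity
  have h22 : Real.sqrt 2 ^ 2 = 2 := Real.sq_sqrt (by norm_num)
  -- The pointwise identity needs no sign condition on the radicand: a nonnegative constant
  -- factors out of the real square root in every case.
  have key : ∀ x : ℝ, x ^ 1 * Real.sqrt (2*h + x^2 - x^4/2)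
      = s^2 / (2 * Real.sqrt 2)
        * (((fun v : ℝ => Real.sqrt (1 - v^2)) ∘ fun x : ℝ => (x^2 - 1)/s) x * (2*x/s)) := by
    intro x
    have e : 2*h + x^2 - x^4/2 = (s / Real.sqrt 2)^2 * (1 - ((x^2 - 1)/s)^2) := by
      have hh' : h = (s^2 - 1)/4 := by linarith
      rw [div_pow, h22, hh']
      field_simp
      ring
    rw [e, Real.sqrt_mul (sq_nonneg _), Real.sqrt_sq (by positivity), Function.comp_apply]
    field_simp
  have sub : ∫ x in (xminus h)..(xplus h),
      ((fun v : ℝ => Real.sqrt (1 - v^2)) ∘ fun x : ℝ => (x^2 - 1)/s) x * (2*x/s)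
      = ∫ v in (-1:ℝ)..1, Real.sqrt (1 - v^2) := by
    rw [intervalIntegral.integral_comp_mul_deriv (f := fun x : ℝ => (x^2 - 1)/s)]
    · rw [hm, hp]
      congr 1 <;> field_simp <;> ring
    · intro x _
      simpa using ((hasDerivAt_pow 2 x).sub_const 1).div_const s
    · fun_prop
    · fun_prop
  rw [AbI]
  simp only [key]
  rw [intervalIntegral.integral_const_mul, sub, integral_sqrt_one_sub_sq, hs2]
  field_simp
  rw [h22]
  ring

/-- For every `h ∈ (−1/4, 0)`, `I₁` is differentiable at `h` with
`I₁(h) = (h + 1/4)·I₁'(h)`, and explicitly `I₁(h) = π√2·(h + 1/4)`. -/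
theorem I1_eq : ∀ h ∈ Set.Ioo (-(1:ℝ)/4) 0,
    DifferentiableAt ℝ (AbI 1) h ∧
    AbI 1 h = (h + 1/4) * deriv (AbI 1) h ∧
    AbI 1 h = Real.pi * Real.sqrt 2 * (h + 1/4) := by
  intro h hh
  have ev : AbI 1 =ᶠ[nhds h] fun t => Real.pi * Real.sqrt 2 * (t + 1/4) :=
    Filter.eventually_of_mem (isOpen_Ioo.mem_nhds hh) fun t ht => AbI_one_eq ht
  have hd : HasDerivAt (AbI 1) (Real.pi * Real.sqrt 2) h := by
    refine HasDerivAt.congr_of_eventuallyEq ?_ ev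
    simpa using ((hasDerivAt_id h).add_const (1/4 : ℝ)).const_mul (Real.pi * Real.sqrt 2)
  refine ⟨hd.differentiableAt, ?_, AbI_one_eq hh⟩
  rw [hd.deriv, AbI_one_eq hh]
  ring
end

section
/- For every h ∈ (−1/4, 0), I₀ and I₂ are differentiable at h and satisfy the Picard–Fuchs system I₀(h) = (4/3)·h·I₀'(h) + (1/3)·I₂'(h) and I₂(h) = (4/15)·h·I₀'(h) + (4/15)·(3h+1)·I₂'(h). -/
/-!
The substitution `x = √(1 + s sin θ)` with `s = √(1 + 4h)` maps `[-π/2, π/2]` onto `[x₋(h), x₊(h)]`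
and turns `2h + x² - x⁴/2` into `s² cos² θ / 2`.  Hence (`AbI_eq`)
`I_k(h) = (s²/√2) P_k(s)` with `P_k(s) = ∫ cos² θ · w^(k-1) dθ`, `w = √(1 + s sin θ)`.
The interval is now fixed and the integrand is smooth in `s` for `0 < s < 1`, so `P_k` may be
differentiated under the integral sign (`hasDerivAt_P`), and
`I_k'(h) = (4 P_k + 2 s P_k') / √2` by the chain rule.

After this, each of the two Picard–Fuchs relations says that a certain integral vanishes, and both
reduce to the same integrand `cos² θ · w⁻³ (5w⁴ - 4w² + s² - 1)`, which is the derivative of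
`-2 s cos³ θ / w`, a function vanishing at `±π/2` (`integral_exact`).
-/

open Set

open Real intervalIntegral Topology

/-- `w(s, θ) = √(1 + s sin θ)`, the `x`-coordinate on the oval `δ((s² - 1)/4)`. -/
noncomputable def wf (s θ : ℝ) : ℝ := √(1 + s * sin θ)

/-- The integrand `cos² θ · w^(k-1)`, written as a quotient so that `k = 0` is covered. -/
noncomputable def pf (k : ℕ) (s θ : ℝ) : ℝ := cos θ ^ 2 * (wf s θ ^ k / wf s θ)

/-- The partial derivative of `pf k s θ` with respect to `s`. -/
noncomputable def dpf (k : ℕ) (s θ : ℝ) : ℝ :=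
  cos θ ^ 2 * (((k : ℝ) - 1) / 2 * sin θ * wf s θ ^ k / wf s θ ^ 3)

lemma one_add_mul_sin_pos {s : ℝ} (hs : s ∈ Ioo (0 : ℝ) 1) (θ : ℝ) : 0 < 1 + s * sin θ := by
  nlinarith [neg_one_le_sin θ, hs.1, hs.2]

lemma wf_pos {s : ℝ} (hs : s ∈ Ioo (0 : ℝ) 1) (θ : ℝ) : 0 < wf s θ :=
  Real.sqrt_pos.2 (one_add_mul_sin_pos hs θ)

lemma wf_sq {s : ℝ} (hs : s ∈ Ioo (0 : ℝ) 1) (θ : ℝ) : wf s θ ^ 2 = 1 + s * sin θ :=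
  Real.sq_sqrt (one_add_mul_sin_pos hs θ).le

lemma continuous_wf : Continuous fun p : ℝ × ℝ => wf p.1 p.2 := by
  unfold wf; fun_prop

lemma continuous_wf_right (s : ℝ) : Continuous (wf s) := by
  unfold wf; fun_prop

lemma continuous_pf (k : ℕ) {s : ℝ} (hs : s ∈ Ioo (0 : ℝ) 1) : Continuous (pf k s) := by
  have h := continuous_wf_right s
  unfold pf
  exact (by fun_prop : Continuous fun θ => cos θ ^ 2).mul
    ((h.pow k).div h fun θ => (wf_pos hs θ).ne')

lemma continuousOn_dpf (k : ℕ) :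
    ContinuousOn (fun p : ℝ × ℝ => dpf k p.1 p.2) (Ioo (0 : ℝ) 1 ×ˢ univ) := by
  have h := continuous_wf
  unfold dpf
  refine ContinuousOn.mul (by fun_prop) (ContinuousOn.div (by fun_prop) (by fun_prop) ?_)
  rintro ⟨s, θ⟩ ⟨hs, -⟩
  exact (pow_pos (wf_pos hs θ) 3).ne'

lemma continuous_dpf (k : ℕ) {s : ℝ} (hs : s ∈ Ioo (0 : ℝ) 1) : Continuous (dpf k s) :=
  (continuousOn_dpf k).comp_continuous (f := fun θ => (s, θ)) (by fun_prop)
    fun _ => ⟨hs, trivial⟩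

lemma hasDerivAt_wf_left {s : ℝ} (hs : s ∈ Ioo (0 : ℝ) 1) (θ : ℝ) :
    HasDerivAt (fun t => wf t θ) (sin θ / (2 * wf s θ)) s := by
  have h : HasDerivAt (fun t => 1 + t * sin θ) (sin θ) s := by
    simpa using ((hasDerivAt_id s).mul_const (sin θ)).const_add 1
  exact h.sqrt (one_add_mul_sin_pos hs θ).ne'

lemma hasDerivAt_wf_right {s : ℝ} (hs : s ∈ Ioo (0 : ℝ) 1) (θ : ℝ) :
    HasDerivAt (wf s) (s * cos θ / (2 * wf s θ)) θ := by
  have h : HasDerivAt (fun t => 1 + s * sin t) (s * cos θ) θ :=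
    ((hasDerivAt_sin θ).const_mul s).const_add 1
  exact h.sqrt (one_add_mul_sin_pos hs θ).ne'

lemma hasDerivAt_pf (k : ℕ) {s : ℝ} (hs : s ∈ Ioo (0 : ℝ) 1) (θ : ℝ) :
    HasDerivAt (fun t => pf k t θ) (dpf k s θ) s := by
  have h := hasDerivAt_wf_left hs θ
  have hw := (wf_pos hs θ).ne'
  refine (((h.pow k).div h hw).const_mul (cos θ ^ 2)).congr_deriv ?_
  unfold dpf
  simp only [Pi.pow_apply]
  rcases k with _ | k
  · simp only [Nat.cast_zero, zero_mul, pow_zero]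
    field_simp
    ring
  · simp only [Nat.add_sub_cancel]
    push_cast
    field_simp
    ring

/-- Differentiation under the integral sign; the dominating function is a constant, obtained from
compactness of `[s/2, (1+s)/2] × [-π/2, π/2]`. -/
lemma hasDerivAt_P (k : ℕ) {s : ℝ} (hs : s ∈ Ioo (0 : ℝ) 1) :
    HasDerivAt (fun t => ∫ θ in (-(π/2))..(π/2), pf k t θ)
      (∫ θ in (-(π/2))..(π/2), dpf k s θ) s := by
  have hsub : Icc (s/2) ((1+s)/2) ⊆ Ioo (0 : ℝ) 1 := fun t ht =>
    ⟨by linarith [ht.1, hs.1], by linarith [ht.2, hs.2]⟩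
  have hnhds : Icc (s/2) ((1+s)/2) ∈ 𝓝 s :=
    Icc_mem_nhds (by linarith [hs.1]) (by linarith [hs.2])
  obtain ⟨C, hC⟩ := (isCompact_Icc.prod isCompact_uIcc).exists_bound_of_continuousOn
    ((continuousOn_dpf k).mono
      (Set.prod_mono hsub (subset_univ (uIcc (-(π/2)) (π/2)))))
  refine (hasDerivAt_integral_of_dominated_loc_of_deriv_le (F' := dpf k) (bound := fun _ => C)
    hnhds ?_ ((continuous_pf k hs).intervalIntegrable _ _)
    (continuous_dpf k hs).aestronglyMeasurable ?_ intervalIntegrable_const ?_).2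
  · filter_upwards [hnhds] with t ht
    exact (continuous_pf k (hsub ht)).aestronglyMeasurable
  · exact .of_forall fun θ hθ t ht => hC (t, θ) ⟨ht, uIoc_subset_uIcc hθ⟩
  · exact .of_forall fun θ _ t ht => hasDerivAt_pf k (hsub ht) θ

lemma sqrt_mem {h : ℝ} (hh : h ∈ Ioo (-(1:ℝ)/4) 0) : √(1 + 4*h) ∈ Ioo (0 : ℝ) 1 := by
  refine ⟨Real.sqrt_pos.2 (by linarith [hh.1]), ?_⟩
  rw [Real.sqrt_lt' one_pos]
  linarith [hh.2]

/-- The substitution `x = √(1 + s sin θ)` in the Abelian integral. -/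
lemma AbI_eq (k : ℕ) {h : ℝ} (hh : h ∈ Ioo (-(1:ℝ)/4) 0) :
    AbI k h = √(1 + 4*h) ^ 2 / √2 * ∫ θ in (-(π/2))..(π/2), pf k (√(1 + 4*h)) θ := by
  have hs := sqrt_mem hh
  have hs2 : √(1 + 4*h) ^ 2 = 1 + 4*h := Real.sq_sqrt (by linarith [hh.1])
  unfold AbI
  set s := √(1 + 4*h) with hsdef
  have hm : xminus h = wf s (-(π/2)) := by
    simp [xminus, wf, ← hsdef, sub_eq_add_neg]
  have hp : xplus h = wf s (π/2) := by simp [xplus, wf, ← hsdef]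
  rw [hm, hp, ← integral_comp_mul_deriv (fun θ _ => hasDerivAt_wf_right hs θ)
    (Continuous.continuousOn (Continuous.div (by fun_prop)
      (continuous_const.mul (continuous_wf_right s))
      fun θ => (mul_pos two_pos (wf_pos hs θ)).ne')) (by fun_prop),
    ← intervalIntegral.integral_const_mul, ← intervalIntegral.integral_const_mul]
  refine integral_congr fun θ hθ => ?_
  rw [uIcc_of_le (by linarith [pi_pos])] at hθ
  have hc : 0 ≤ cos θ := cos_nonneg_of_mem_Icc hθ
  have hw := wf_pos hs θ
  have hw2 := wf_sq hs θ
  have h2 : (0:ℝ) < √2 := by positivity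
  have hy : √(2*h + wf s θ ^ 2 - wf s θ ^ 4 / 2) = s * cos θ / √2 := by
    have hs1 := hs.1.le
    rw [show 2*h + wf s θ ^ 2 - wf s θ ^ 4 / 2 = (s * cos θ) ^ 2 / 2 by
      rw [mul_pow, cos_sq']
      linear_combination (-1/2) * hs2 + (1/2 - wf s θ ^ 2 / 2 - s * sin θ / 2) * hw2,
      Real.sqrt_div (sq_nonneg _), Real.sqrt_sq (by positivity)]
  simp only [Function.comp, hy, pf]
  field_simp

/-- The integral of `d(-2 s cos³ θ / w)` over `[-π/2, π/2]` vanishes. -/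
lemma integral_exact {s : ℝ} (hs : s ∈ Ioo (0 : ℝ) 1) {f : ℝ → ℝ} (hf : Continuous f)
    (hfw : ∀ θ, f θ =
      cos θ ^ 2 * (5 * wf s θ ^ 4 - 4 * wf s θ ^ 2 + s ^ 2 - 1) / wf s θ ^ 3) :
    ∫ θ in (-(π/2))..(π/2), f θ = 0 := by
  have hd : ∀ θ ∈ uIcc (-(π/2)) (π/2),
      HasDerivAt (fun θ => -2 * s * (cos θ ^ 3 / wf s θ)) (f θ) θ := by
    intro θ _
    have hw := (wf_pos hs θ).ne'
    refine ((((hasDerivAt_cos θ).pow 3).div (hasDerivAt_wf_right hs θ) hw).const_mul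
      (-2 * s)).congr_deriv ?_
    have h1 : s * sin θ = wf s θ ^ 2 - 1 := by rw [wf_sq hs]; ring
    have h2 : s ^ 2 * cos θ ^ 2 = s ^ 2 - (wf s θ ^ 2 - 1) ^ 2 := by
      rw [← h1, cos_sq']; ring
    rw [hfw]
    simp only [Pi.pow_apply]
    field_simp
    push_cast
    linear_combination cos θ ^ 2 * (6 * wf s θ ^ 2 * h1 + h2)
  rw [integral_eq_sub_of_hasDerivAt hd (hf.intervalIntegrable _ _)]
  simp

lemma hasDerivAt_AbI (k : ℕ) {h : ℝ} (hh : h ∈ Ioo (-(1:ℝ)/4) 0) :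
    HasDerivAt (AbI k) ((4 * (∫ θ in (-(π/2))..(π/2), pf k (√(1 + 4*h)) θ)
      + 2 * √(1 + 4*h) * ∫ θ in (-(π/2))..(π/2), dpf k (√(1 + 4*h)) θ) / √2) h := by
  have hs := sqrt_mem hh
  have hsd : HasDerivAt (fun h => √(1 + 4*h)) (4 / (2 * √(1 + 4*h))) h := by
    have : HasDerivAt (fun h : ℝ => 1 + 4*h) 4 h := by
      simpa using ((hasDerivAt_id h).const_mul 4).const_add 1
    exact this.sqrt (by linarith [hh.1])
  have hP := (hasDerivAt_P k hs).comp h hsd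
  refine ((((hsd.pow 2).div_const (√2)).mul hP).congr_of_eventuallyEq ?_).congr_deriv ?_
  · filter_upwards [Ioo_mem_nhds hh.1 hh.2] with t ht
    exact AbI_eq k ht
  · have h0 := hs.1.ne'
    simp only [Pi.pow_apply, Function.comp]
    field_simp
    push_cast
    ring

/-- A combination of integrals of `pf` and `dpf` vanishes as soon as the same combination of the
integrands is the exact form of `integral_exact`. -/
lemma combo {s : ℝ} (hs : s ∈ Ioo (0 : ℝ) 1) (a b c d : ℝ)
    (H : ∀ θ, a * pf 0 s θ + b * dpf 0 s θ + c * pf 2 s θ + d * dpf 2 s θ =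
      cos θ ^ 2 * (5 * wf s θ ^ 4 - 4 * wf s θ ^ 2 + s ^ 2 - 1) / wf s θ ^ 3) :
    a * (∫ θ in (-(π/2))..(π/2), pf 0 s θ) + b * (∫ θ in (-(π/2))..(π/2), dpf 0 s θ)
      + c * (∫ θ in (-(π/2))..(π/2), pf 2 s θ) + d * (∫ θ in (-(π/2))..(π/2), dpf 2 s θ) = 0 := by
  have h1 := (continuous_pf 0 hs).const_mul a
    |>.intervalIntegrable (μ := MeasureTheory.volume) (-(π/2)) (π/2)
  have h2 := (continuous_dpf 0 hs).const_mul b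
    |>.intervalIntegrable (μ := MeasureTheory.volume) (-(π/2)) (π/2)
  have h3 := (continuous_pf 2 hs).const_mul c
    |>.intervalIntegrable (μ := MeasureTheory.volume) (-(π/2)) (π/2)
  have h4 := (continuous_dpf 2 hs).const_mul d
    |>.intervalIntegrable (μ := MeasureTheory.volume) (-(π/2)) (π/2)
  have hc : Continuous fun θ =>
      a * pf 0 s θ + b * dpf 0 s θ + c * pf 2 s θ + d * dpf 2 s θ := by
    have := continuous_pf 0 hs
    have := continuous_dpf 0 hs
    have := continuous_pf 2 hs
    have := continuous_dpf 2 hs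
    fun_prop
  rw [← integral_exact hs hc H, intervalIntegral.integral_add ((h1.add h2).add h3) h4,
    intervalIntegral.integral_add (h1.add h2) h3, intervalIntegral.integral_add h1 h2]
  simp only [intervalIntegral.integral_const_mul]

/-- The Picard–Fuchs system for `I₀, I₂` on `(−1/4, 0)`. -/
theorem picard_fuchs : ∀ h ∈ Set.Ioo (-(1:ℝ)/4) 0,
    DifferentiableAt ℝ (AbI 0) h ∧ DifferentiableAt ℝ (AbI 2) h ∧
    AbI 0 h = (4/3) * h * deriv (AbI 0) h + (1/3) * deriv (AbI 2) h ∧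
    AbI 2 h = (4/15) * h * deriv (AbI 0) h + (4/15) * (3*h + 1) * deriv (AbI 2) h := by
  intro h hh
  have hd0 := hasDerivAt_AbI 0 hh
  have hd2 := hasDerivAt_AbI 2 hh
  refine ⟨hd0.differentiableAt, hd2.differentiableAt, ?_⟩
  rw [hd0.deriv, hd2.deriv, AbI_eq 0 hh, AbI_eq 2 hh]
  have hs := sqrt_mem hh
  have hh' : h = (√(1 + 4*h) ^ 2 - 1) / 4 := by
    rw [Real.sq_sqrt (by linarith [hh.1])]; ring
  set s := √(1 + 4*h)
  have key1 := combo hs ((s^2 - 1) * 4 - 3 * s^2) ((s^2 - 1) * (2 * s)) 4 (2 * s) (by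
    intro θ
    have hw := (wf_pos hs θ).ne'
    have h1 : s * sin θ = wf s θ ^ 2 - 1 := by rw [wf_sq hs]; ring
    simp only [pf, dpf]
    push_cast
    field_simp
    linear_combination cos θ ^ 2 * (wf s θ ^ 2 - s^2 + 1) * h1)
  have key2 := combo hs ((s^2 - 1) * 4) ((s^2 - 1) * (2 * s)) ((3 * s^2 + 1) * 4 - 15 * s^2)
    ((3 * s^2 + 1) * (2 * s)) (by
    intro θ
    have hw := (wf_pos hs θ).ne'
    have h1 : s * sin θ = wf s θ ^ 2 - 1 := by rw [wf_sq hs]; ring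
    simp only [pf, dpf]
    push_cast
    field_simp
    linear_combination cos θ ^ 2 * ((3 * s^2 + 1) * wf s θ ^ 2 - s^2 + 1) * h1)
  rw [hh']
  constructor
  · linear_combination (-1 / (3 * √2)) * key1
  · linear_combination (-1 / (15 * √2)) * key2
end

section
/- For every integer k ≥ 0 and every h ∈ (−1/4, 0), the integrals I_k are differentiable at h and satisfy the two relations (k+1)·I_k(h) = I_{k+4}'(h) − I_{k+2}'(h) and (k+3)·I_k(h) = 4h·I_k'(h) + I_{k+2}'(h). -/
/-!
Put `s = √(1+4h) ∈ (0,1)`. Since `2h + x² - x⁴/2 = (s² - (x²-1)²)/2`, the oval is parametrized by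
`x² = 1 + s sin θ`, `y = s cos θ / √2` with `θ ∈ [-π/2, π/2]` (upper half). With `p = (k-1)/2` this
gives `√2 · I_k = ∫ (1 + s sin θ)^p (s cos θ)² dθ` (`AbI_eq_area`), an integral over a fixed interval
with an integrand smooth in `s`, so the square-root singularities at the moving endpoints are gone.

Differentiating under the integral sign and integrating by parts yields
`I_k' = √2 ∫ (1 + s sin θ)^p dθ` (`AbI_hasDerivAt`), i.e. `I_k' = 2 ∫ x^k / y dx`. Passing from `k` to
`k + 2` raises `p` by one. The first relation is then one more integration by parts
(`area_eq_moment_sub`), and the second combines it with the equation of the oval written as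
`I_k = 2h I_k' + I_{k+2}' - I_{k+4}'/2` (`area_eq_moments`).
-/

open Set

open MeasureTheory Topology

lemma base_pos {s : ℝ} (h0 : 0 < s) (h1 : s < 1) (θ : ℝ) : 0 < 1 + s * Real.sin θ := by
  nlinarith [Real.neg_one_le_sin θ]

lemma base_hasDerivAt {s : ℝ} (h0 : 0 < s) (h1 : s < 1) (p θ : ℝ) :
    HasDerivAt (fun θ => (1 + s * Real.sin θ) ^ p)
      (p * (1 + s * Real.sin θ) ^ (p - 1) * (s * Real.cos θ)) θ := by
  have h := (((Real.hasDerivAt_sin θ).const_mul s).const_add 1).rpow_const (p := p)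
    (Or.inl (base_pos h0 h1 θ).ne')
  convert h using 1
  ring

lemma base_continuous {s : ℝ} (h0 : 0 < s) (h1 : s < 1) (p : ℝ) :
    Continuous (fun θ => (1 + s * Real.sin θ) ^ p) :=
  continuous_iff_continuousAt.2 fun θ => (base_hasDerivAt h0 h1 p θ).continuousAt

/-- The moment `∫ (1 + s sin θ)^p dθ` over `[-π/2, π/2]`. For `p = (k-1)/2` and `s = √(1+4h)` it is
`1/√2` times the complete integral `2 ∫ x^k / y dx` along the oval. -/
noncomputable def moment (p s : ℝ) : ℝ :=
  ∫ θ in (-(Real.pi / 2))..(Real.pi / 2), (1 + s * Real.sin θ) ^ p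

/-- The integral `∫ (1 + s sin θ)^p s² cos² θ dθ` over `[-π/2, π/2]`. For `p = (k-1)/2` and
`s = √(1+4h)` it is `√2 · I_k(h)`. -/
noncomputable def area (p s : ℝ) : ℝ :=
  ∫ θ in (-(Real.pi / 2))..(Real.pi / 2), (1 + s * Real.sin θ) ^ p * (s * Real.cos θ) ^ 2

/-- The substitution `x = √(1 + s sin θ)`, under which `y = s cos θ / √2`. -/
lemma AbI_eq_area (k : ℕ) {h : ℝ} (hh : h ∈ Ioo (-(1:ℝ)/4) 0) :
    AbI k h = area (((k:ℝ) - 1) / 2) (Real.sqrt (1 + 4 * h)) / Real.sqrt 2 := by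
  obtain ⟨hl, hu⟩ := hh
  have hs2 : Real.sqrt (1 + 4 * h) ^ 2 = 1 + 4 * h := Real.sq_sqrt (by linarith)
  have h0 : 0 < Real.sqrt (1 + 4 * h) := Real.sqrt_pos.2 (by linarith)
  have h1 : Real.sqrt (1 + 4 * h) < 1 := by
    rw [Real.sqrt_lt' one_pos]; linarith
  unfold AbI area xminus xplus
  set s := Real.sqrt (1 + 4 * h) with hs
  have hsub := intervalIntegral.integral_comp_mul_deriv (a := -(Real.pi / 2)) (b := Real.pi / 2)
    (f := fun θ => (1 + s * Real.sin θ) ^ (1 / 2 : ℝ))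
    (f' := fun θ => (1 / 2 : ℝ) * (1 + s * Real.sin θ) ^ ((1 / 2 : ℝ) - 1) * (s * Real.cos θ))
    (g := fun x => x ^ k * Real.sqrt (2 * h + x ^ 2 - x ^ 4 / 2))
    (fun θ _ => base_hasDerivAt h0 h1 _ θ)
    (((continuous_const.mul (base_continuous h0 h1 _)).mul
      (continuous_const.mul Real.continuous_cos)).continuousOn)
    (by fun_prop)
  simp only [Real.sin_neg, Real.sin_pi_div_two, mul_one, mul_neg, ← sub_eq_add_neg,
    ← Real.sqrt_eq_rpow] at hsub
  rw [← hsub, ← intervalIntegral.integral_const_mul, ← intervalIntegral.integral_div]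
  refine intervalIntegral.integral_congr fun θ hθ => ?_
  rw [uIcc_of_le (by linarith [Real.pi_pos])] at hθ
  have hc : 0 ≤ Real.cos θ := Real.cos_nonneg_of_mem_Icc hθ
  have hb := base_pos h0 h1 θ
  simp only [Function.comp]
  set u := 1 + s * Real.sin θ with hu'
  have hx2 : Real.sqrt u ^ 2 = u := Real.sq_sqrt hb.le
  have hx4 : Real.sqrt u ^ 4 = u ^ 2 := by
    rw [show 4 = 2 * 2 from rfl, pow_mul, hx2]
  have hy : Real.sqrt (2 * h + Real.sqrt u ^ 2 - Real.sqrt u ^ 4 / 2)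
      = s * Real.cos θ / Real.sqrt 2 := by
    rw [hx2, hx4, show 2 * h + u - u ^ 2 / 2 = (s * Real.cos θ) ^ 2 / 2 by
      rw [mul_pow, Real.cos_sq', hu']; linear_combination (-1 / 2 : ℝ) * hs2,
      Real.sqrt_div (sq_nonneg _), Real.sqrt_sq (by positivity)]
  have hp : Real.sqrt u ^ k * u ^ ((1 / 2 : ℝ) - 1) = u ^ (((k:ℝ) - 1) / 2) := by
    rw [Real.sqrt_eq_rpow, ← Real.rpow_natCast, ← Real.rpow_mul hb.le, ← Real.rpow_add hb]
    congr 1; ring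
  rw [hy, ← hp]
  ring

/-- Integration by parts of `d (cos θ · (1 + s sin θ)^(p+1))`. -/
lemma area_eq_moment_sub {s : ℝ} (h0 : 0 < s) (h1 : s < 1) (p : ℝ) :
    (p + 1) * area p s = moment (p + 2) s - moment (p + 1) s := by
  have hF : ∀ θ ∈ uIcc (-(Real.pi / 2)) (Real.pi / 2),
      HasDerivAt (fun θ => s * Real.cos θ * (1 + s * Real.sin θ) ^ (p + 1))
        ((p + 1) * ((1 + s * Real.sin θ) ^ p * (s * Real.cos θ) ^ 2)
          - ((1 + s * Real.sin θ) ^ (p + 2) - (1 + s * Real.sin θ) ^ (p + 1))) θ := by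
    intro θ _
    have hb := base_pos h0 h1 θ
    refine (((Real.hasDerivAt_cos θ).const_mul s).mul
      (base_hasDerivAt h0 h1 (p + 1) θ)).congr_deriv ?_
    rw [show p + 2 = p + 1 + 1 by ring, Real.rpow_add_one hb.ne' (p + 1), add_sub_cancel_right]
    ring
  have hc := base_continuous h0 h1
  have c1 : Continuous fun θ => (p + 1) * ((1 + s * Real.sin θ) ^ p * (s * Real.cos θ) ^ 2) :=
    continuous_const.mul ((hc p).mul (by fun_prop))
  have c2 : Continuous fun θ => (1 + s * Real.sin θ) ^ (p + 2) - (1 + s * Real.sin θ) ^ (p + 1) :=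
    (hc (p + 2)).sub (hc (p + 1))
  have := intervalIntegral.integral_eq_sub_of_hasDerivAt hF
    ((c1.sub c2).intervalIntegrable _ _)
  rw [intervalIntegral.integral_sub (c1.intervalIntegrable _ _) (c2.intervalIntegrable _ _),
    intervalIntegral.integral_sub ((hc _).intervalIntegrable _ _) ((hc _).intervalIntegrable _ _),
    intervalIntegral.integral_const_mul] at this
  simp only [Real.cos_neg, Real.cos_pi_div_two, mul_zero, zero_mul, sub_self] at this
  unfold area moment
  linarith

/-- The relation `y² = 2h + x² - x⁴/2` on the oval, integrated against `x^k / y`. -/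
lemma area_eq_moments {s : ℝ} (h0 : 0 < s) (h1 : s < 1) (p : ℝ) :
    area p s = (s ^ 2 - 1) * moment p s + 2 * moment (p + 1) s - moment (p + 2) s := by
  have hc := base_continuous h0 h1
  have c : Continuous fun θ =>
      (s ^ 2 - 1) * (1 + s * Real.sin θ) ^ p + 2 * (1 + s * Real.sin θ) ^ (p + 1) :=
    ((hc _).const_mul _).add ((hc _).const_mul _)
  unfold area moment
  rw [← intervalIntegral.integral_const_mul, ← intervalIntegral.integral_const_mul,
    ← intervalIntegral.integral_add (((hc _).const_mul _).intervalIntegrable _ _)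
      (((hc _).const_mul _).intervalIntegrable _ _),
    ← intervalIntegral.integral_sub (c.intervalIntegrable _ _) ((hc _).intervalIntegrable _ _)]
  refine intervalIntegral.integral_congr fun θ _ => ?_
  have hb := base_pos h0 h1 θ
  rw [show p + 2 = p + 1 + 1 by ring, Real.rpow_add_one hb.ne' (p + 1), Real.rpow_add_one hb.ne' p,
    mul_pow, Real.cos_sq']
  ring

/-- After differentiating under the integral sign, `d (sin θ cos θ (1 + s sin θ)^p)` is used to
remove the power `p - 1`. -/
lemma area_hasDerivAt {s : ℝ} (h0 : 0 < s) (h1 : s < 1) (p : ℝ) :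
    HasDerivAt (area p) (s * moment p s) s := by
  have hc := base_continuous h0 h1
  set G : ℝ → ℝ → ℝ := fun s θ =>
    p * (1 + s * Real.sin θ) ^ (p - 1) * Real.sin θ * (s * Real.cos θ) ^ 2
      + (1 + s * Real.sin θ) ^ p * (2 * s * Real.cos θ ^ 2) with hG
  obtain ⟨a, ha0, has⟩ := exists_between h0
  obtain ⟨b, hsb, hb1⟩ := exists_between h1
  -- `G` is jointly continuous, hence bounded, on the compact rectangle `[a, b] × [-π/2, π/2]`.
  have hGc : ContinuousOn (fun z : ℝ × ℝ => G z.1 z.2)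
      (Icc a b ×ˢ Icc (-(Real.pi / 2)) (Real.pi / 2)) := by
    have hne : ∀ z ∈ Icc a b ×ˢ Icc (-(Real.pi / 2)) (Real.pi / 2),
        1 + z.1 * Real.sin z.2 ≠ 0 := fun z hz =>
      (base_pos (ha0.trans_le hz.1.1) (hz.1.2.trans_lt hb1) z.2).ne'
    have hr : ∀ q : ℝ, ContinuousOn (fun z : ℝ × ℝ => (1 + z.1 * Real.sin z.2) ^ q)
        (Icc a b ×ˢ Icc (-(Real.pi / 2)) (Real.pi / 2)) := fun q =>
      ContinuousOn.rpow_const (by fun_prop) fun z hz => Or.inl (hne z hz)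
    have := hr p
    have := hr (p - 1)
    simp only [hG]
    fun_prop
  obtain ⟨C, hC⟩ := (isCompact_Icc.prod isCompact_Icc).exists_bound_of_continuousOn hGc
  have hpi : -(Real.pi / 2) ≤ Real.pi / 2 := by linarith [Real.pi_pos]
  have hcont : ∀ {t : ℝ}, 0 < t → t < 1 →
      Continuous fun θ => (1 + t * Real.sin θ) ^ p * (t * Real.cos θ) ^ 2 := fun ht0 ht1 =>
    (base_continuous ht0 ht1 p).mul (by fun_prop)
  have hGs : Continuous (G s) :=
    ((((hc (p - 1)).const_mul p).mul Real.continuous_sin).mul (by fun_prop)).add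
      ((hc p).mul (by fun_prop))
  have hnhds : Icc a b ∈ 𝓝 s := Icc_mem_nhds has hsb
  have hD := (intervalIntegral.hasDerivAt_integral_of_dominated_loc_of_deriv_le
    (μ := volume) (a := -(Real.pi / 2)) (b := Real.pi / 2) (bound := fun _ => C)
    (F := fun t θ => (1 + t * Real.sin θ) ^ p * (t * Real.cos θ) ^ 2) (F' := G) hnhds
    (by
      filter_upwards [hnhds] with t ht
      exact (hcont (ha0.trans_le ht.1) (ht.2.trans_lt hb1)).aestronglyMeasurable)
    ((hcont h0 h1).intervalIntegrable _ _)
    hGs.aestronglyMeasurable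
    (Filter.Eventually.of_forall fun θ hθ t ht => by
      rw [uIoc_of_le hpi] at hθ
      exact hC (t, θ) ⟨ht, Ioc_subset_Icc_self hθ⟩)
    intervalIntegrable_const
    (Filter.Eventually.of_forall fun θ _ t ht => by
      have hb := base_pos (ha0.trans_le ht.1) (ht.2.trans_lt hb1) θ
      have d1 := (((hasDerivAt_id t).mul_const (Real.sin θ)).const_add 1).rpow_const (p := p)
        (Or.inl hb.ne')
      have d2 := ((hasDerivAt_id t).mul_const (Real.cos θ)).pow 2
      refine (d1.mul d2).congr_deriv ?_
      simp only [hG, id, Pi.pow_apply]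
      push_cast
      ring)).2
  have hF : ∀ θ ∈ uIcc (-(Real.pi / 2)) (Real.pi / 2),
      HasDerivAt (fun θ => s * (Real.sin θ * Real.cos θ) * (1 + s * Real.sin θ) ^ p)
        (G s θ - s * (1 + s * Real.sin θ) ^ p) θ := by
    intro θ _
    refine ((((Real.hasDerivAt_sin θ).mul (Real.hasDerivAt_cos θ)).const_mul s).mul
      (base_hasDerivAt h0 h1 p θ)).congr_deriv ?_
    simp only [hG, Pi.mul_apply]
    linear_combination (-s * (1 + s * Real.sin θ) ^ p) * Real.sin_sq_add_cos_sq θ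
  have hI := intervalIntegral.integral_eq_sub_of_hasDerivAt hF
    ((hGs.sub ((hc p).const_mul s)).intervalIntegrable _ _)
  rw [intervalIntegral.integral_sub (hGs.intervalIntegrable _ _)
    (((hc p).const_mul s).intervalIntegrable _ _), intervalIntegral.integral_const_mul] at hI
  simp only [Real.cos_neg, Real.cos_pi_div_two, mul_zero, zero_mul, sub_self] at hI
  have : s * moment p s = ∫ θ in (-(Real.pi / 2))..(Real.pi / 2), G s θ := by
    unfold moment; linarith
  rw [this]
  exact hD

/-- `I_k'(h) = 2 ∫ x^k / y dx`, in the trigonometric parametrization. -/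
lemma AbI_hasDerivAt (k : ℕ) {h : ℝ} (hh : h ∈ Ioo (-(1:ℝ)/4) 0) :
    HasDerivAt (AbI k)
      (Real.sqrt 2 * moment (((k:ℝ) - 1) / 2) (Real.sqrt (1 + 4 * h))) h := by
  have hpos : 0 < 1 + 4 * h := by linarith [hh.1]
  have h0 : 0 < Real.sqrt (1 + 4 * h) := Real.sqrt_pos.2 hpos
  have h1 : Real.sqrt (1 + 4 * h) < 1 := by
    rw [Real.sqrt_lt' one_pos]; linarith [hh.2]
  have hs : HasDerivAt (fun h : ℝ => Real.sqrt (1 + 4 * h)) (2 / Real.sqrt (1 + 4 * h)) h := by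
    refine ((((hasDerivAt_id h).const_mul 4).const_add 1).sqrt hpos.ne').congr_deriv ?_
    simp only [id]
    ring
  have hd := ((area_hasDerivAt h0 h1 (((k:ℝ) - 1) / 2)).comp h hs).div_const (Real.sqrt 2)
  have he : AbI k =ᶠ[𝓝 h]
      fun h => area (((k:ℝ) - 1) / 2) (Real.sqrt (1 + 4 * h)) / Real.sqrt 2 := by
    filter_upwards [Ioo_mem_nhds hh.1 hh.2] with t ht using AbI_eq_area k ht
  refine (hd.congr_of_eventuallyEq he).congr_deriv ?_
  have h2 : Real.sqrt 2 ^ 2 = 2 := Real.sq_sqrt (by norm_num)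
  have h2' : Real.sqrt 2 ≠ 0 := by positivity
  field_simp
  rw [h2, mul_comm]

/-- The two basic recursive relations among the Abelian integrals `I_k`. -/
theorem abelian_recursions : ∀ (k : ℕ), ∀ h ∈ Set.Ioo (-(1:ℝ)/4) 0,
    DifferentiableAt ℝ (AbI k) h ∧
    ((k : ℝ) + 1) * AbI k h = deriv (AbI (k+4)) h - deriv (AbI (k+2)) h ∧
    ((k : ℝ) + 3) * AbI k h = 4 * h * deriv (AbI k) h + deriv (AbI (k+2)) h := by
  intro k h hh
  have hpos : 0 < 1 + 4 * h := by linarith [hh.1]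
  have h0 : 0 < Real.sqrt (1 + 4 * h) := Real.sqrt_pos.2 hpos
  have h1 : Real.sqrt (1 + 4 * h) < 1 := by
    rw [Real.sqrt_lt' one_pos]; linarith [hh.2]
  refine ⟨(AbI_hasDerivAt k hh).differentiableAt, ?_⟩
  rw [(AbI_hasDerivAt (k + 4) hh).deriv, (AbI_hasDerivAt (k + 2) hh).deriv,
    (AbI_hasDerivAt k hh).deriv, AbI_eq_area k hh]
  set p : ℝ := ((k:ℝ) - 1) / 2 with hp
  have hk : (k:ℝ) = 2 * p + 1 := by rw [hp]; ring
  have e2 : (((k + 2 : ℕ) : ℝ) - 1) / 2 = p + 1 := by rw [hp]; push_cast; ring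
  have e4 : (((k + 4 : ℕ) : ℝ) - 1) / 2 = p + 2 := by rw [hp]; push_cast; ring
  rw [e2, e4, hk]
  have r1 := area_eq_moment_sub h0 h1 p
  have r2 := area_eq_moments h0 h1 p
  rw [Real.sq_sqrt hpos.le] at r2
  have h2 : Real.sqrt 2 ^ 2 = 2 := Real.sq_sqrt (by norm_num)
  have h2' : Real.sqrt 2 ≠ 0 := by positivity
  constructor
  · field_simp
    rw [h2]
    linear_combination 2 * r1
  · field_simp
    rw [h2]
    linear_combination 2 * r1 + 2 * r2
end

section
/- For every h ∈ (−1/4, 0) the following reduction identities hold: I₃(h) = I₁(h); I₄(h) = (4/7)·h·I₀(h) + (8/7)·I₂(h); I_{0,3}(h) = (12/7)·h·I₀(h) + (3/7)·I₂(h); I_{1,3}(h) = (3/8 + (3/2)·h)·I₁(h); and I_{2,3}(h) = (4/21)·h·I₀(h) + (8/21 + (4/3)·h)·I₂(h). -/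
/-!
Write `w = 2h + x² − x⁴/2`. The endpoints `x₋(h)`, `x₊(h)` are zeros of `w`, so the exact form
`d(x^m w^{3/2})` integrates to zero over `[x₋, x₊]`. Since `w' = 2(x − x³)` and
`w^{3/2} = w √w`, this is a linear relation between the integrals `I_k`
(`moment_relation_zero` and `moment_relation_succ`):
`I₃ = I₁` for `m = 0`, and, for `m = n + 1`,
`(n+1)(2h I_n + I_{n+2} − I_{n+4}/2) + 3 (I_{n+2} − I_{n+4}) = 0`.
The same expansion of `w` gives `I_{k,3} = 2h I_k + I_{k+2} − I_{k+4}/2` (`AbI3_eq`).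
Taking `m = 0, 1, 2, 3` and `k = 0, 1, 2`, the five identities follow by linear algebra.
-/

open Set

/-- The integral `I_{k,3}(h) = 2∫_{x₋(h)}^{x₊(h)} x^k (2h + x² − x⁴/2)^{3/2} dx`. -/
noncomputable def AbI3 (k : ℕ) (h : ℝ) : ℝ :=
  2 * ∫ x in (xminus h)..(xplus h), x ^ k * (2*h + x^2 - x^4/2) ^ ((3:ℝ)/2)

/-- This holds also for negative `w`, where both sides vanish: `Real.sqrt` is zero there, and
`Real.rpow` carries the factor `cos (3π/2)`. -/
lemma rpow_three_halves (w : ℝ) : w ^ ((3:ℝ)/2) = w * Real.sqrt w := by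
  rcases le_or_gt 0 w with hw | hw
  · rw [show (3:ℝ)/2 = 1 + 1/2 by norm_num, Real.rpow_add_of_nonneg hw (by norm_num) (by norm_num),
      Real.rpow_one, Real.sqrt_eq_rpow]
  · rw [Real.rpow_def_of_neg hw, Real.sqrt_eq_zero_of_nonpos hw.le,
      show (3:ℝ)/2 * Real.pi = Real.pi / 2 + Real.pi by ring, Real.cos_add_pi, Real.cos_pi_div_two]
    simp

lemma w_xminus {h : ℝ} (hh : h ∈ Set.Ioo (-(1:ℝ)/4) 0) :
    2*h + (xminus h)^2 - (xminus h)^4/2 = 0 := by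
  have h0 : 0 ≤ 1 + 4*h := by linarith [hh.1]
  have h1 : Real.sqrt (1 + 4*h) ≤ 1 := Real.sqrt_le_one.mpr (by linarith [hh.2])
  have e : (xminus h)^2 = 1 - Real.sqrt (1 + 4*h) := Real.sq_sqrt (by linarith)
  linear_combination (1 - ((xminus h)^2 + (1 - Real.sqrt (1 + 4*h)))/2) * e
    - (1/2) * Real.sq_sqrt h0

lemma w_xplus {h : ℝ} (hh : h ∈ Set.Ioo (-(1:ℝ)/4) 0) :
    2*h + (xplus h)^2 - (xplus h)^4/2 = 0 := by
  have h0 : 0 ≤ 1 + 4*h := by linarith [hh.1]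
  have e : (xplus h)^2 = 1 + Real.sqrt (1 + 4*h) := Real.sq_sqrt (by positivity)
  linear_combination (1 - ((xplus h)^2 + (1 + Real.sqrt (1 + 4*h)))/2) * e
    - (1/2) * Real.sq_sqrt h0

lemma intervalIntegrable_moment (k : ℕ) (h a b : ℝ) :
    IntervalIntegrable (fun x : ℝ => x ^ k * Real.sqrt (2*h + x^2 - x^4/2))
      MeasureTheory.volume a b :=
  Continuous.intervalIntegrable (by fun_prop) a b

/-- Integration is linear on three moments; all the relations below involve at most three. -/
lemma integral_three_moments (h c₁ c₂ c₃ : ℝ) (i j k : ℕ) :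
    2 * ∫ x in (xminus h)..(xplus h),
      (c₁ * (x ^ i * Real.sqrt (2*h + x^2 - x^4/2)) + c₂ * (x ^ j * Real.sqrt (2*h + x^2 - x^4/2))
        + c₃ * (x ^ k * Real.sqrt (2*h + x^2 - x^4/2)))
      = c₁ * AbI i h + c₂ * AbI j h + c₃ * AbI k h := by
  have H := fun n => intervalIntegrable_moment n h (xminus h) (xplus h)
  rw [intervalIntegral.integral_add (((H i).const_mul c₁).add ((H j).const_mul c₂))
      ((H k).const_mul c₃),
    intervalIntegral.integral_add ((H i).const_mul c₁) ((H j).const_mul c₂),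
    intervalIntegral.integral_const_mul, intervalIntegral.integral_const_mul,
    intervalIntegral.integral_const_mul]
  unfold AbI
  ring

lemma AbI3_eq (k : ℕ) (h : ℝ) :
    AbI3 k h = 2*h * AbI k h + 1 * AbI (k+2) h + (-1/2) * AbI (k+4) h := by
  rw [← integral_three_moments]
  unfold AbI3
  congr 2
  funext x
  rw [rpow_three_halves]
  ring

/-- Valid at every real `x`, since the exponent `3/2` is at least `1`. -/
lemma hasDerivAt_w_rpow (h x : ℝ) :
    HasDerivAt (fun x : ℝ => (2*h + x^2 - x^4/2) ^ ((3:ℝ)/2))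
      (3 * (x - x^3) * Real.sqrt (2*h + x^2 - x^4/2)) x := by
  have hw : HasDerivAt (fun x : ℝ => 2*h + x^2 - x^4/2) (2*x - 2*x^3) x := by
    have := ((hasDerivAt_pow 2 x).const_add (2*h)).sub ((hasDerivAt_pow 4 x).div_const 2)
    exact this.congr_deriv (by norm_num; ring)
  refine (hw.rpow_const (p := (3:ℝ)/2) (Or.inr (by norm_num))).congr_deriv ?_
  rw [Real.sqrt_eq_rpow, show (3:ℝ)/2 - 1 = 1/2 by norm_num]
  ring

/-- The integral of `d(w^{3/2})` over the oval vanishes. -/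
lemma moment_relation_zero {h : ℝ} (hh : h ∈ Set.Ioo (-(1:ℝ)/4) 0) : AbI 3 h = AbI 1 h := by
  have key := intervalIntegral.integral_eq_sub_of_hasDerivAt
    (a := xminus h) (b := xplus h) (fun x _ => hasDerivAt_w_rpow h x)
    (Continuous.intervalIntegrable (by fun_prop) _ _)
  simp only [w_xminus hh, w_xplus hh, sub_self] at key
  have lin := integral_three_moments h 3 (-3) 0 1 3 0
  rw [show (fun x : ℝ => 3 * (x ^ 1 * Real.sqrt (2*h + x^2 - x^4/2))
      + (-3) * (x ^ 3 * Real.sqrt (2*h + x^2 - x^4/2))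
      + 0 * (x ^ 0 * Real.sqrt (2*h + x^2 - x^4/2)))
      = fun x => 3 * (x - x^3) * Real.sqrt (2*h + x^2 - x^4/2) from by funext x; ring, key] at lin
  linarith

/-- The integral of `d(x^(n+1) w^{3/2})` over the oval vanishes. -/
lemma moment_relation_succ {h : ℝ} (hh : h ∈ Set.Ioo (-(1:ℝ)/4) 0) (n : ℕ) :
    (n + 1) * AbI3 n h + 3 * (AbI (n+2) h - AbI (n+4) h) = 0 := by
  have hd : ∀ x : ℝ, HasDerivAt (fun x : ℝ => x^(n+1) * (2*h + x^2 - x^4/2) ^ ((3:ℝ)/2))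
      ((n+1) * (2*h) * (x ^ n * Real.sqrt (2*h + x^2 - x^4/2))
        + (n + 4) * (x ^ (n+2) * Real.sqrt (2*h + x^2 - x^4/2))
        + (-((n+1)/2 + 3)) * (x ^ (n+4) * Real.sqrt (2*h + x^2 - x^4/2))) x := by
    intro x
    refine ((hasDerivAt_pow (n+1) x).mul (hasDerivAt_w_rpow h x)).congr_deriv ?_
    rw [rpow_three_halves]
    push_cast
    ring
  have key := intervalIntegral.integral_eq_sub_of_hasDerivAt
    (a := xminus h) (b := xplus h) (fun x _ => hd x)
    (Continuous.intervalIntegrable (by fun_prop) _ _)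
  rw [w_xminus hh, w_xplus hh, Real.zero_rpow (by norm_num)] at key
  have lin := integral_three_moments h ((n+1) * (2*h)) (n+4) (-((n+1)/2 + 3)) n (n+2) (n+4)
  rw [key] at lin
  rw [AbI3_eq]
  linarith

/-- Reduction identities expressing `I₃, I₄, I_{0,3}, I_{1,3}, I_{2,3}`
through the basic integrals `I₀, I₁, I₂`. -/
theorem reduction_identities : ∀ h ∈ Set.Ioo (-(1:ℝ)/4) 0,
    AbI 3 h = AbI 1 h ∧
    AbI 4 h = (4/7) * h * AbI 0 h + (8/7) * AbI 2 h ∧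
    AbI3 0 h = (12/7) * h * AbI 0 h + (3/7) * AbI 2 h ∧
    AbI3 1 h = (3/8 + (3/2) * h) * AbI 1 h ∧
    AbI3 2 h = (4/21) * h * AbI 0 h + (8/21 + (4/3) * h) * AbI 2 h := by
  intro h hh
  have r0 := moment_relation_zero hh
  have r1 := moment_relation_succ hh 0
  have r2 := moment_relation_succ hh 1
  have r3 := moment_relation_succ hh 2
  have e0 := AbI3_eq 0 h
  have e1 := AbI3_eq 1 h
  have e2 := AbI3_eq 2 h
  norm_num at r1 r2 r3 e0 e1 e2
  refine ⟨r0, ?_, ?_, ?_, ?_⟩ <;> linarith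
end
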